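/- Let L ≥ 1, a < b with b − a ≥ 1, and ε > 0. Let S, S_0 ∈ Σ_L satisfy S(x) = S_0(x) for all x ∉ [a,b] and sup_{x ∈ [a,b]} |S(x) − S_0(x)| ≤ ε. Then |J(S) − J(S_0)| ≤ J(S_0) · (e^{4(b−a)ε} − 1). In particular, if a family (S_ε) satisfies these hypotheses for each ε > 0, then J(S_ε) → J(S_0) as ε → 0. -/

import Mathlib

open MeasureTheory Real Set Filter

noncomputable section

/-- `f` is Lipschitz with constant `L` and continuous. -/
def IsLip (L : ℝ) (f : ℝ → ℝ) : Prop :=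
  Continuous f ∧ ∀ x y : ℝ, |f x - f y| ≤ L * |x - y|

/-- The functional class `Σ_L`. -/
def SigmaL (L : ℝ) (S : ℝ → ℝ) : Prop :=
  IsLip L S ∧ (∀ z : ℝ, |z| ≤ L → |S z| ≤ L) ∧
  ∃ S' : ℝ → ℝ, ContinuousOn S' {x : ℝ | L ≤ |x|} ∧
    ∀ x : ℝ, L ≤ |x| → HasDerivAt S (S' x) x ∧ -L ≤ S' x ∧ S' x ≤ -(1/L)

/-- Normalizing constant of the ergodic density. -/
def qdenom (S : ℝ → ℝ) : ℝ := ∫ y : ℝ, Real.exp (2 * ∫ z in (0:ℝ)..y, S z)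

/-- The ergodic density `q_S`. -/
def qdens (S : ℝ → ℝ) (x : ℝ) : ℝ :=
  Real.exp (2 * ∫ z in (0:ℝ)..x, S z) / qdenom S

/-- `J(S) = ∫_a^b 1/q_S(u) du`. -/
def Jfun (a b : ℝ) (S : ℝ → ℝ) : ℝ := ∫ u in a..b, 1 / qdens S u

end

lemma aux_int {a b ε : ℝ} (hab : a < b) (hε : 0 < ε) {S T : ℝ → ℝ} (hS : Continuous S)
    (hT : Continuous T) (h1 : ∀ x ∉ Set.Icc a b, S x = T x)
    (h2 : ∀ x ∈ Set.Icc a b, |S x - T x| ≤ ε) (y : ℝ) :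
    ∫ z in (0:ℝ)..y, S z ≤ (∫ z in (0:ℝ)..y, T z) + (b - a) * ε := by
  have hsub : (∫ z in (0:ℝ)..y, S z) - (∫ z in (0:ℝ)..y, T z) = ∫ z in (0:ℝ)..y, (S z - T z) :=
    (intervalIntegral.integral_sub (hS.intervalIntegrable _ _) (hT.intervalIntegrable _ _)).symm
  have hI : Integrable ((Set.Icc a b).indicator (fun _ => ε)) := by
    rw [integrable_indicator_iff measurableSet_Icc]
    simp
  have hpt : ∀ z, ‖S z - T z‖ ≤ (Set.Icc a b).indicator (fun _ => ε) z := by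
    intro z
    by_cases hz : z ∈ Set.Icc a b
    · rw [Set.indicator_of_mem hz]; exact h2 z hz
    · rw [Set.indicator_of_notMem hz, h1 z hz]; simp
  have hv : ∫ z, (Set.Icc a b).indicator (fun _ => ε) z = (b - a) * ε := by
    rw [integral_indicator measurableSet_Icc]
    simp [hab.le]
  have k1 := intervalIntegral.norm_integral_le_integral_norm_uIoc
    (f := fun z => S z - T z) (a := 0) (b := y) (μ := volume)
  have k2 : ∫ z in Set.uIoc 0 y, ‖S z - T z‖ ≤
      ∫ z in Set.uIoc 0 y, (Set.Icc a b).indicator (fun _ => ε) z :=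
    integral_mono_of_nonneg (Eventually.of_forall fun z => norm_nonneg _) hI.integrableOn
      (Eventually.of_forall hpt)
  have k3 : ∫ z in Set.uIoc 0 y, (Set.Icc a b).indicator (fun _ => ε) z ≤
      ∫ z, (Set.Icc a b).indicator (fun _ => ε) z :=
    setIntegral_le_integral hI (Eventually.of_forall fun z => (norm_nonneg _).trans (hpt z))
  have k4 := le_abs_self (∫ z in (0:ℝ)..y, (S z - T z))
  rw [Real.norm_eq_abs] at k1
  linarith

lemma aux_cont {S : ℝ → ℝ} (hS : Continuous S) : Continuous fun y => ∫ z in (0:ℝ)..y, S z :=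
  intervalIntegral.continuous_primitive (fun _ _ => hS.intervalIntegrable _ _) 0

lemma qdenom_nonneg' (S : ℝ → ℝ) : 0 ≤ qdenom S := integral_nonneg fun _ => (Real.exp_pos _).le

lemma aux_q {d : ℝ} {S T : ℝ → ℝ} (hS : Continuous S)
    (hT : Continuous T)
    (h1 : ∀ y : ℝ, ∫ z in (0:ℝ)..y, S z ≤ (∫ z in (0:ℝ)..y, T z) + d)
    (h2 : ∀ y : ℝ, ∫ z in (0:ℝ)..y, T z ≤ (∫ z in (0:ℝ)..y, S z) + d) :
    qdenom S ≤ Real.exp (2 * d) * qdenom T := by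
  have key : ∀ (U V : ℝ → ℝ), (∀ y : ℝ, ∫ z in (0:ℝ)..y, U z ≤ (∫ z in (0:ℝ)..y, V z) + d) →
      ∀ y : ℝ, Real.exp (2 * ∫ z in (0:ℝ)..y, U z) ≤
        Real.exp (2 * d) * Real.exp (2 * ∫ z in (0:ℝ)..y, V z) := by
    intro U V h y
    rw [← Real.exp_add, Real.exp_le_exp]
    linarith [h y]
  by_cases hi : Integrable fun y : ℝ => Real.exp (2 * ∫ z in (0:ℝ)..y, T z)
  · unfold qdenom
    rw [← integral_const_mul]
    exact integral_mono_of_nonneg (Eventually.of_forall fun _ => (Real.exp_pos _).le)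
      (hi.const_mul _) (Eventually.of_forall (key S T h1))
  · have hn : ¬ Integrable fun y : ℝ => Real.exp (2 * ∫ z in (0:ℝ)..y, S z) := by
      intro h
      apply hi
      refine (h.const_mul (Real.exp (2 * d))).mono' ?_ (Eventually.of_forall fun y => ?_)
      · exact (Real.continuous_exp.comp (continuous_const.mul (aux_cont hT))).aestronglyMeasurable
      · rw [Real.norm_eq_abs, abs_of_pos (Real.exp_pos _)]
        exact key T S h2 y
    have : qdenom S = 0 := integral_undef hn
    rw [this]
    exact mul_nonneg (Real.exp_pos _).le (qdenom_nonneg' T)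

lemma J_eq (a b : ℝ) (S : ℝ → ℝ) :
    Jfun a b S = qdenom S * ∫ u in a..b, Real.exp (-(2 * ∫ z in (0:ℝ)..u, S z)) := by
  unfold Jfun qdens
  rw [← intervalIntegral.integral_const_mul]
  congr 1
  funext u
  rw [one_div_div, Real.exp_neg, div_eq_mul_inv]

lemma J_nonneg {a b : ℝ} (hab : a < b) (S : ℝ → ℝ) : 0 ≤ Jfun a b S := by
  rw [J_eq]
  exact mul_nonneg (qdenom_nonneg' S)
    (intervalIntegral.integral_nonneg hab.le fun _ _ => (Real.exp_pos _).le)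

lemma J_le {a b d : ℝ} (hab : a < b) {S T : ℝ → ℝ} (hS : Continuous S)
    (hT : Continuous T)
    (h1 : ∀ y : ℝ, ∫ z in (0:ℝ)..y, S z ≤ (∫ z in (0:ℝ)..y, T z) + d)
    (h2 : ∀ y : ℝ, ∫ z in (0:ℝ)..y, T z ≤ (∫ z in (0:ℝ)..y, S z) + d) :
    Jfun a b S ≤ Jfun a b T * Real.exp (4 * d) := by
  rw [J_eq, J_eq]
  have hc : ∀ U : ℝ → ℝ, Continuous U →
      Continuous fun u => Real.exp (-(2 * ∫ z in (0:ℝ)..u, U z)) := fun U hU =>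
    Real.continuous_exp.comp (continuous_const.mul (aux_cont hU)).neg
  have k : ∫ u in a..b, Real.exp (-(2 * ∫ z in (0:ℝ)..u, S z)) ≤
      Real.exp (2 * d) * ∫ u in a..b, Real.exp (-(2 * ∫ z in (0:ℝ)..u, T z)) := by
    rw [← intervalIntegral.integral_const_mul]
    refine intervalIntegral.integral_mono_on hab.le ((hc S hS).intervalIntegrable _ _)
      ((continuous_const.mul (hc T hT)).intervalIntegrable _ _) fun u _ => ?_
    rw [← Real.exp_add, Real.exp_le_exp]
    linarith [h2 u]
  have k0 : 0 ≤ ∫ u in a..b, Real.exp (-(2 * ∫ z in (0:ℝ)..u, S z)) :=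
    intervalIntegral.integral_nonneg hab.le fun _ _ => (Real.exp_pos _).le
  have m := mul_le_mul (aux_q hS hT h1 h2) k k0
    (mul_nonneg (Real.exp_pos _).le (qdenom_nonneg' T))
  have e : Real.exp (4 * d) = Real.exp (2 * d) * Real.exp (2 * d) := by
    rw [← Real.exp_add]; ring_nf
  rw [e]
  linarith

/-- under the hypotheses of Statement 15,
`|J(S) − J(S_0)| ≤ J(S_0)(e^{4(b−a)ε} − 1)`; consequently for any family
`(S_ε)_{ε>0}` satisfying these hypotheses, `J(S_ε) → J(S_0)` as `ε → 0+`. -/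
theorem stmt16 (L a b : ℝ) (hL : 1 ≤ L) (hab : a < b) (hba : 1 ≤ b - a)
    (S0 : ℝ → ℝ) (hS0 : SigmaL L S0) :
    (∀ ε : ℝ, 0 < ε → ∀ S : ℝ → ℝ, SigmaL L S →
      (∀ x ∉ Set.Icc a b, S x = S0 x) →
      (∀ x ∈ Set.Icc a b, |S x - S0 x| ≤ ε) →
      |Jfun a b S - Jfun a b S0| ≤ Jfun a b S0 * (Real.exp (4 * (b - a) * ε) - 1)) ∧
    ∀ Sfam : ℝ → ℝ → ℝ,
      (∀ ε : ℝ, 0 < ε → SigmaL L (Sfam ε) ∧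
        (∀ x ∉ Set.Icc a b, Sfam ε x = S0 x) ∧
        (∀ x ∈ Set.Icc a b, |Sfam ε x - S0 x| ≤ ε)) →
      Filter.Tendsto (fun ε : ℝ => Jfun a b (Sfam ε))
        (nhdsWithin 0 (Set.Ioi 0)) (nhds (Jfun a b S0)) := by
  have main : ∀ ε : ℝ, 0 < ε → ∀ S : ℝ → ℝ, SigmaL L S →
      (∀ x ∉ Set.Icc a b, S x = S0 x) →
      (∀ x ∈ Set.Icc a b, |S x - S0 x| ≤ ε) →
      |Jfun a b S - Jfun a b S0| ≤ Jfun a b S0 * (Real.exp (4 * (b - a) * ε) - 1) := by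
    intro ε hε S hS h1 h2
    have cS := hS.1.1
    have c0 := hS0.1.1
    have i1 := aux_int hab hε cS c0 h1 h2
    have i2 := aux_int hab hε c0 cS (fun x hx => (h1 x hx).symm)
      (fun x hx => by rw [abs_sub_comm]; exact h2 x hx)
    have j1 := J_le hab cS c0 i1 i2
    have j2 := J_le hab c0 cS i2 i1
    rw [← mul_assoc] at j1 j2
    have n0 := J_nonneg hab S0
    have n1 := J_nonneg hab S
    have hE : 1 ≤ Real.exp (4 * (b - a) * ε) := by
      apply Real.one_le_exp
      have : 0 < b - a := by linarith
      positivity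
    generalize Real.exp (4 * (b - a) * ε) = E at *
    rw [abs_le]
    constructor
    · by_cases h : Jfun a b S ≤ Jfun a b S0
      · nlinarith
      · push Not at h
        nlinarith
    · nlinarith
  refine ⟨main, fun Sfam h => ?_⟩
  rw [tendsto_iff_norm_sub_tendsto_zero]
  have hl : Tendsto (fun ε : ℝ => Jfun a b S0 * (Real.exp (4 * (b - a) * ε) - 1))
      (nhdsWithin 0 (Set.Ioi 0)) (nhds 0) := by
    have hc : Continuous (fun ε : ℝ => Jfun a b S0 * (Real.exp (4 * (b - a) * ε) - 1)) := by
      fun_prop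
    have := hc.tendsto 0
    simp only [mul_zero, Real.exp_zero, sub_self] at this
    exact this.mono_left nhdsWithin_le_nhds
  refine squeeze_zero' (Eventually.of_forall fun _ => norm_nonneg _) ?_ hl
  filter_upwards [self_mem_nhdsWithin] with ε hε
  obtain ⟨p, q, r⟩ := h ε hε
  exact main ε hε _ p q r
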